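/- Let S be a Cu-semigroup with weak cancellation satisfying (O5) and (O6+), let e, x ∈ S, and assume e is compact. Then the set { z ∈ S : z ≤ e and z ≤ x } is upward directed. -/

import Mathlib

/-- The way-below (compact containment) relation on a partially ordered set:
`WayBelow x y` holds if whenever `(y n)` is an increasing sequence admitting a
supremum `s` with `y ≤ s`, then `x ≤ y n` for some `n`. -/
def WayBelow {S : Type*} [PartialOrder S] (x y : S) : Prop :=
  ∀ f : ℕ → S, Monotone f → ∀ s : S, IsLUB (Set.range f) s → y ≤ s → ∃ n, x ≤ f n

/-- An abstract Cuntz semigroup (Cu-semigroup): a positively ordered commutative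
monoid satisfying the axioms (O1)-(O4). -/
class CuSemigroup (S : Type*) [AddCommMonoid S] [PartialOrder S] : Prop where
  /-- The order is positive. -/
  zero_le : ∀ x : S, 0 ≤ x
  /-- Addition is order-preserving. -/
  add_le_add : ∀ {x y z w : S}, x ≤ y → z ≤ w → x + z ≤ y + w
  /-- (O1): every increasing sequence has a supremum. -/
  O1 : ∀ f : ℕ → S, Monotone f → ∃ s : S, IsLUB (Set.range f) s
  /-- (O2): every element is the supremum of a `≪`-increasing sequence. -/
  O2 : ∀ x : S, ∃ f : ℕ → S, (∀ n, WayBelow (f n) (f (n + 1))) ∧ IsLUB (Set.range f) x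
  /-- (O3): the way-below relation is additive. -/
  O3 : ∀ {x' x y' y : S}, WayBelow x' x → WayBelow y' y → WayBelow (x' + y') (x + y)
  /-- (O4): addition is compatible with suprema of increasing sequences. -/
  O4 : ∀ (f g : ℕ → S), Monotone f → Monotone g → ∀ a b : S,
        IsLUB (Set.range f) a → IsLUB (Set.range g) b →
        IsLUB (Set.range fun n => f n + g n) (a + b)

/-- Axiom (O5) (almost algebraic order). -/
def O5 (S : Type*) [AddCommMonoid S] [PartialOrder S] : Prop :=
  ∀ x' x z : S, WayBelow x' x → x ≤ z → ∃ w : S, x' + w ≤ z ∧ z ≤ x + w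

/-- Axiom (O6+). -/
def O6plus (S : Type*) [AddCommMonoid S] [PartialOrder S] : Prop :=
  ∀ a b c x' x y' y : S, a ≤ b + c →
    WayBelow x' x → x ≤ a → x ≤ b → WayBelow y' y → y ≤ a → y ≤ c →
    ∃ e f : S, a ≤ e + f ∧ WayBelow x' e ∧ e ≤ a ∧ e ≤ b ∧
      WayBelow y' f ∧ f ≤ a ∧ f ≤ c

/-- Weak cancellation: `x + z ≪ y + z` implies `x ≪ y`. -/
def WeakCancel (S : Type*) [AddCommMonoid S] [PartialOrder S] : Prop :=
  ∀ x y z : S, WayBelow (x + z) (y + z) → WayBelow x y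

/-- A Cu-semigroup is countably based if there is a countable subset `B` such that every
element is the supremum of a `≪`-increasing sequence with elements in `B`. -/
def CountablyBased (S : Type*) [AddCommMonoid S] [PartialOrder S] : Prop :=
  ∃ B : Set S, B.Countable ∧ ∀ x : S, ∃ f : ℕ → S, (∀ n, f n ∈ B) ∧
    (∀ n, WayBelow (f n) (f (n + 1))) ∧ IsLUB (Set.range f) x

/-- Addition distributes over the infimum operation. -/
def InfDistrib (S : Type*) [AddCommMonoid S] [SemilatticeInf S] : Prop :=
  ∀ x y z : S, (x + z) ⊓ (y + z) = (x ⊓ y) + z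

/-- A functional on an ordered monoid: a `[0,∞]`-valued map preserving `0`, addition,
order, and suprema of increasing sequences. -/
def IsFunctional {S : Type*} [AddCommMonoid S] [PartialOrder S] (l : S → ENNReal) : Prop :=
  l 0 = 0 ∧ (∀ x y : S, l (x + y) = l x + l y) ∧ (∀ x y : S, x ≤ y → l x ≤ l y) ∧
    ∀ (f : ℕ → S) (s : S), Monotone f → IsLUB (Set.range f) s → l s = ⨆ n, l (f n)

/-- An element is soft if each of its way-below approximants `x'` satisfies
`(k+1)·x' ≤ k·x` for some `k`. -/
def Soft {S : Type*} [AddCommMonoid S] [PartialOrder S] (x : S) : Prop :=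
  ∀ x' : S, WayBelow x' x → ∃ k : ℕ, (k + 1) • x' ≤ k • x

/-- An element `x` is full if `∞·x = sup_n n·x` exists and dominates every element. -/
def IsFull {S : Type*} [AddCommMonoid S] [PartialOrder S] (x : S) : Prop :=
  ∃ s : S, IsLUB (Set.range fun n : ℕ => n • x) s ∧ ∀ t : S, t ≤ s

theorem WB_le {S : Type*} [PartialOrder S] {x y : S} (h : WayBelow x y) : x ≤ y := by
  obtain ⟨_, hn⟩ := h (fun _ => y) (fun _ _ _ => le_rfl) y (by simp) le_rfl
  exact hn

theorem WB_trans_le {S : Type*} [PartialOrder S] {x y z : S} (h : WayBelow x y) (h' : y ≤ z) :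
    WayBelow x z := fun f hf s hs hz => h f hf s hs (h'.trans hz)

theorem WB_le_trans {S : Type*} [PartialOrder S] {x y z : S} (h' : x ≤ y) (h : WayBelow y z) :
    WayBelow x z := fun f hf s hs hz => (h f hf s hs hz).imp fun _ hn => h'.trans hn

theorem WB_core {S : Type*} [AddCommMonoid S] [PartialOrder S]
    [CuSemigroup S] (h5 : O5 S) (h6 : O6plus S) (hwc : WeakCancel S)
    (e x : S) (he : WayBelow e e) {y' y z' z : S} (hy : WayBelow y' y) (hye : y ≤ e) (hyx : y ≤ x)
    (hz : WayBelow z' z) (hze : z ≤ e) (hzx : z ≤ x) :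
    ∃ s, s ≤ e ∧ s ≤ x ∧ WayBelow y' s ∧ WayBelow z' s := by
  obtain ⟨w, hw1, hw2⟩ := h5 z' z e hz hze
  have h00 : WayBelow (0 : S) 0 := fun f _ _ _ _ => ⟨0, CuSemigroup.zero_le _⟩
  obtain ⟨s, t, hst, h1, h2, h3, -, -, h4⟩ := h6 e x w y' y 0 0
    (hw2.trans (CuSemigroup.add_le_add hzx le_rfl)) hy hye hyx h00
    (CuSemigroup.zero_le _) (CuSemigroup.zero_le _)
  refine ⟨s, h2, h3, h1, hwc z' s w ?_⟩
  exact WB_le_trans hw1 (WB_trans_le he (hst.trans (CuSemigroup.add_le_add le_rfl h4)))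

/-- In a weakly cancellative Cu-semigroup satisfying (O5) and (O6+), for a compact
element `e` and any `x`, the set of common lower bounds of `e` and `x` is upward
directed. -/
theorem directedOn_lowerBounds_of_compact {S : Type*} [AddCommMonoid S] [PartialOrder S]
    [CuSemigroup S] (h5 : O5 S) (h6 : O6plus S) (hwc : WeakCancel S)
    (e x : S) (he : WayBelow e e) :
    DirectedOn (· ≤ ·) {z : S | z ≤ e ∧ z ≤ x} := by
  rintro y ⟨hye, hyx⟩ z ⟨hze, hzx⟩
  let P : S → Prop := fun u => ∃ v, v ≤ e ∧ v ≤ x ∧ WayBelow u v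
  have step : ∀ u v, P u → P v → ∃ w, P w ∧ u ≤ w ∧ v ≤ w := by
    rintro u v ⟨u1, a1, a2, a3⟩ ⟨v1, b1, b2, b3⟩
    obtain ⟨s, s1, s2, s3, s4⟩ := WB_core h5 h6 hwc e x he a3 a1 a2 b3 b1 b2
    obtain ⟨f, hf, hs⟩ := CuSemigroup.O2 s
    have hm : Monotone f := monotone_nat_of_le_succ fun n => WB_le (hf n)
    obtain ⟨n, hn⟩ := s3 f hm s hs le_rfl
    obtain ⟨m, hmm⟩ := s4 f hm s hs le_rfl
    exact ⟨f (max n m), ⟨s, s1, s2, WB_trans_le (hf _) (hs.1 ⟨_, rfl⟩)⟩,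
      hn.trans (hm (le_max_left _ _)), hmm.trans (hm (le_max_right _ _))⟩
  obtain ⟨f, hf, hfy⟩ := CuSemigroup.O2 y
  obtain ⟨g, hg, hgz⟩ := CuSemigroup.O2 z
  have Pf : ∀ n, P (f n) := fun n => ⟨y, hye, hyx, WB_trans_le (hf n) (hfy.1 ⟨_, rfl⟩)⟩
  have Pg : ∀ n, P (g n) := fun n => ⟨z, hze, hzx, WB_trans_le (hg n) (hgz.1 ⟨_, rfl⟩)⟩
  have step3 : ∀ (n : ℕ) (u : {u // P u}), ∃ w : {u // P u},
      u.1 ≤ w.1 ∧ f n ≤ w.1 ∧ g n ≤ w.1 := by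
    rintro n ⟨u, hu⟩
    obtain ⟨v, hv, v1, v2⟩ := step u (f n) hu (Pf n)
    obtain ⟨w, hw, w1, w2⟩ := step v (g n) hv (Pg n)
    exact ⟨⟨w, hw⟩, v1.trans w1, v2.trans w1, w2⟩
  choose F hF using step3
  let W : ℕ → {u // P u} := fun n => Nat.rec ⟨f 0, Pf 0⟩ (fun n u => F n u) n
  have hW : ∀ n, (W n).1 ≤ (W (n+1)).1 ∧ f n ≤ (W (n+1)).1 ∧ g n ≤ (W (n+1)).1 :=
    fun n => hF n (W n)
  obtain ⟨s, hs⟩ := CuSemigroup.O1 (fun n => (W n).1) (monotone_nat_of_le_succ fun n => (hW n).1)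
  refine ⟨s, ⟨hs.2 ?_, hs.2 ?_⟩, hfy.2 ?_, hgz.2 ?_⟩
  · rintro _ ⟨n, rfl⟩
    obtain ⟨v, h1, h2, h3⟩ := (W n).2
    exact (WB_le h3).trans h1
  · rintro _ ⟨n, rfl⟩
    obtain ⟨v, h1, h2, h3⟩ := (W n).2
    exact (WB_le h3).trans h2
  · rintro _ ⟨n, rfl⟩
    exact (hW n).2.1.trans (hs.1 ⟨n+1, rfl⟩)
  · rintro _ ⟨n, rfl⟩
    exact (hW n).2.2.trans (hs.1 ⟨n+1, rfl⟩)
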